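/- For 0 < λ < 1 let φ_λ = B ( W^{1/2}/(W+λ) · ω′ ) ∈ L²(I). Then for every 0 < ε < 3/5 there is a constant c_ε > 0 such that ‖φ_λ‖² ≤ c_ε λ^{−1/5 − ε} for all 0 < λ < 1; moreover P φ_λ = − φ_λ. -/

import Mathlib

open MeasureTheory Real Set Filter
open scoped Topology ENNReal ComplexConjugate

noncomputable section

/-- The fundamental periodic cell `I = [0, 2π)`. -/
def II : Set ℝ := Set.Ico 0 (2 * π)

/-- Lebesgue measure restricted to `I`. -/
def muI : Measure ℝ := volume.restrict II

/-- The dispersion relation `ω(x) = |sin(x/2)|`. -/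
def omg (x : ℝ) : ℝ := |Real.sin (x / 2)|

/-- `Ω(x,y,z) = ω(x) + ω(y) − ω(z) − ω(x+y−z)`. -/
def Omg (x y z : ℝ) : ℝ := omg x + omg y - omg z - omg (x + y - z)

/-- The representative of `x` modulo `2π` lying in `[0, 2π)`. -/
def mod2pi (x : ℝ) : ℝ := x - 2 * π * (⌊x / (2 * π)⌋ : ℝ)

/-- `h` on the fundamental cell: `h(x,z) = (z−x)/2 + 2 arcsin( tan(|z−x|/4) cos((x+z)/4) )`. -/
def h0 (x z : ℝ) : ℝ :=
  (z - x) / 2 + 2 * Real.arcsin (Real.tan (|z - x| / 4) * Real.cos ((x + z) / 4))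

/-- The extension of `h` to all of `ℝ²`: `h(x,z) = h(x mod 2π, z mod 2π) − (x − (x mod 2π))`. -/
def hFPU (x z : ℝ) : ℝ := h0 (mod2pi x) (mod2pi z) - (x - mod2pi x)

/-- `F₊(x,y) = (cos(x/2)+cos(y/2))² + 4 sin(x/2) sin(y/2)`. -/
def Fp (x y : ℝ) : ℝ :=
  (Real.cos (x / 2) + Real.cos (y / 2)) ^ 2 + 4 * Real.sin (x / 2) * Real.sin (y / 2)

/-- `F₋(x,y) = (cos(x/2)+cos(y/2))² − 4 sin(x/2) sin(y/2)`. -/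
def Fm (x y : ℝ) : ℝ :=
  (Real.cos (x / 2) + Real.cos (y / 2)) ^ 2 - 4 * Real.sin (x / 2) * Real.sin (y / 2)

/-- The kernel `K₁(x,y) = 4·𝟙(F₋(x,y) > 0)/√(F₋(x,y))`. -/
def K1 (x y : ℝ) : ℝ := if 0 < Fm x y then 4 / Real.sqrt (Fm x y) else 0

/-- The kernel `K₂(x,y) = 2/√(F₊(x,y))`. -/
def K2 (x y : ℝ) : ℝ := 2 / Real.sqrt (Fp x y)

/-- `V(x) = ∫_I K₂(x,y) dy`. -/
def VV (x : ℝ) : ℝ := ∫ y in II, K2 x y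

/-- `W(x) = sin²(x/2)·V(x)`. -/
def WW (x : ℝ) : ℝ := Real.sin (x / 2) ^ 2 * VV x

/-- `ω′(x) = (1/2)cos(x/2)` on `(0,2π)`, `ω′(0) = 0`. -/
def omg' (x : ℝ) : ℝ := if x = 0 then 0 else Real.cos (x / 2) / 2

/-- The kernel of `B`: `B(x,y) = V(x)^{−1/2}(2K₂(x,y)−K₁(x,y))V(y)^{−1/2}`. -/
def Bker (x y : ℝ) : ℝ :=
  VV x ^ (-(1 : ℝ) / 2) * (2 * K2 x y - K1 x y) * VV y ^ (-(1 : ℝ) / 2)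

/-- `φ_λ = B (W^{1/2}/(W+λ) ω′)`, computed via the kernel of `B`. -/
def phiLam (lam x : ℝ) : ℝ :=
  ∫ y in II, Bker x y * (Real.sqrt (WW y) / (WW y + lam) * omg' y)

/-!
Write `s x = sin (x / 2)`. From `F₊ ≥ 4 s(x) s(y)` one gets `K₂ ≤ (s(x) s(y))^(-1/2)`, and near the
corner `(0, 2π)` the function `F₊` is `O(s(x)^(4/3))` on a window of length `s(x)^(1/3)`, whence
`V ≥ s^(-1/3)` and `W ≥ s^(5/3)`. With `W + λ ≥ W^θ λ^(1-θ)` this bounds the source: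
`V^(-1/2) W^(1/2) / (W + λ) = s / (W + λ) ≤ λ^(θ-1) s^(1-5θ/3)`. The exponent of `s` stays above
`-1/2` exactly when `θ < 9/10`, which is what the kernel tolerates:
`∫ (2K₂ + K₁)(x, y) s(y)^t dy ≲ s(x)^(-1/2)` for `t > -1/2`.

For `K₁` this is the critical estimate. In the half-angle tangents `p = tan (x/4)`, `q = tan (y/4)`
the region `x + y < 2π` is `p q < 1`, where the numerator of `F₋` has a single root `q = r` and
vanishes linearly there. Hence the integral over that region is at most
`4 s(x)^(-1/2) ∫₀ʳ dq / √(q (r - q)) = 4π s(x)^(-1/2)`, whatever `r` is, and the reflection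
`(x, y) ↦ (2π - x, 2π - y)`, which preserves the kernels, covers the remaining half.

Therefore `|φ_λ| ≲ V^(-1/2) λ^(θ-1) s^(-1/2) ≤ λ^(θ-1) s^(-1/3)`, which is square integrable, and
`θ = 9/10 - ε/2` gives the rate. The sign under `P` comes from the same reflection, as `ω'` is odd.
-/

section Reflection

variable {E : Type*} [NormedAddCommGroup E] {f : ℝ → E} {a b c : ℝ}

lemma integrableOn_Ioo_of_Ioo_comp_sub_left (hac : a ≤ c) (hcb : c ≤ b)
    (h₁ : IntegrableOn f (Ioo a c))
    (h₂ : IntegrableOn (fun y ↦ f (a + b - y)) (Ioo a (a + b - c))) :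
    IntegrableOn f (Ioo a b) := by
  rw [← intervalIntegrable_iff_integrableOn_Ioo_of_le (by linarith)] at h₁ h₂ ⊢
  have h₃ := (h₂.comp_sub_left (a + b)).symm
  simp only [sub_sub_cancel, add_sub_cancel_left] at h₃
  exact h₁.trans h₃

variable [NormedSpace ℝ E]

lemma setIntegral_Ioo_comp_sub_left (f : ℝ → E) (hab : a ≤ b) :
    ∫ y in Ioo a b, f (a + b - y) = ∫ y in Ioo a b, f y := by
  simp only [← integral_Ioc_eq_integral_Ioo, ← intervalIntegral.integral_of_le hab,
    intervalIntegral.integral_comp_sub_left, add_sub_cancel_right, add_sub_cancel_left]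

lemma setIntegral_Ioo_eq_add_comp_sub_left (hac : a ≤ c) (hcb : c ≤ b)
    (hf : IntegrableOn f (Ioo a b)) :
    ∫ y in Ioo a b, f y =
      (∫ y in Ioo a c, f y) + ∫ y in Ioo a (a + b - c), f (a + b - y) := by
  have hac' : a ≤ a + b - c := by linarith
  have h {u v : ℝ} (hu : a ≤ u) (huv : u ≤ v) (hv : v ≤ b) : IntervalIntegrable f volume u v :=
    (intervalIntegrable_iff_integrableOn_Ioo_of_le huv).2 (hf.mono_set (Ioo_subset_Ioo hu hv))
  simp only [← integral_Ioc_eq_integral_Ioo, ← intervalIntegral.integral_of_le hac,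
    ← intervalIntegral.integral_of_le hac', ← intervalIntegral.integral_of_le (hac.trans hcb),
    intervalIntegral.integral_comp_sub_left, sub_sub_cancel, add_sub_cancel_left,
    intervalIntegral.integral_add_adjacent_intervals (h le_rfl hac hcb) (h hac hcb le_rfl)]

end Reflection

section SinPower

lemma integrableOn_sin_rpow {s : ℝ} (hs : -1 < s) :
    IntegrableOn (fun y ↦ sin y ^ s) (Ioo 0 π) := by
  have hmeas : Measurable fun y ↦ sin y ^ s := measurable_sin.pow_const s
  have hdom : IntegrableOn (fun y ↦ (2 / π) ^ min s 0 * y ^ min s 0) (Ioo 0 (π / 2)) :=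
    ((intervalIntegral.integrableOn_Ioo_rpow_iff (by positivity)).2
      (lt_min hs (by norm_num))).const_mul _
  have hhalf : IntegrableOn (fun y ↦ sin y ^ s) (Ioo 0 (π / 2)) := by
    refine hdom.mono' hmeas.aestronglyMeasurable
      (ae_restrict_of_forall_mem measurableSet_Ioo fun y hy ↦ ?_)
    have hsin : 0 < sin y := sin_pos_of_pos_of_lt_pi hy.1 (by linarith [hy.2, pi_pos])
    rw [norm_of_nonneg (rpow_nonneg hsin.le _)]
    calc sin y ^ s ≤ sin y ^ min s 0 :=
          rpow_le_rpow_of_exponent_ge hsin (sin_le_one y) (min_le_left s 0)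
      _ ≤ (2 / π * y) ^ min s 0 :=
          rpow_le_rpow_of_nonpos (mul_pos (by positivity) hy.1)
            (mul_le_sin hy.1.le hy.2.le) (min_le_right s 0)
      _ = (2 / π) ^ min s 0 * y ^ min s 0 := mul_rpow (by positivity) hy.1.le
  refine integrableOn_Ioo_of_Ioo_comp_sub_left (c := π / 2) (by positivity)
    (by linarith [pi_pos]) hhalf ?_
  simpa only [zero_add, sin_pi_sub, sub_half] using hhalf

lemma integrableOn_sin_half_rpow {s : ℝ} (hs : -1 < s) :
    IntegrableOn (fun y ↦ sin (y / 2) ^ s) (Ioo 0 (2 * π)) := by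
  have h := integrableOn_sin_rpow hs
  rw [← intervalIntegrable_iff_integrableOn_Ioo_of_le (by positivity)] at h ⊢
  simpa [div_eq_inv_mul] using h.comp_mul_left (c := (2 : ℝ)⁻¹)

end SinPower

section Cell

variable {x y : ℝ}

lemma restrict_II : volume.restrict II = volume.restrict (Ioo 0 (2 * π)) :=
  Measure.restrict_congr_set Ioo_ae_eq_Ico.symm

lemma two_pi_sub_mem (hx : x ∈ Ioo 0 (2 * π)) : 2 * π - x ∈ Ioo 0 (2 * π) :=
  ⟨by linarith [hx.2], by linarith [hx.1]⟩

lemma sin_half_pos (hx : x ∈ Ioo 0 (2 * π)) : 0 < sin (x / 2) :=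
  sin_pos_of_pos_of_lt_pi (by linarith [hx.1]) (by linarith [hx.2])

lemma sin_two_pi_sub_half (x : ℝ) : sin ((2 * π - x) / 2) = sin (x / 2) := by
  rw [sub_div, mul_div_cancel_left₀ π two_ne_zero, sin_pi_sub]

lemma cos_two_pi_sub_half (x : ℝ) : cos ((2 * π - x) / 2) = -cos (x / 2) := by
  rw [sub_div, mul_div_cancel_left₀ π two_ne_zero, cos_pi_sub]

lemma setIntegral_comp_two_pi_sub (f : ℝ → ℝ) :
    ∫ y in Ioo 0 (2 * π), f (2 * π - y) = ∫ y in Ioo 0 (2 * π), f y := by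
  simpa only [zero_add] using setIntegral_Ioo_comp_sub_left f two_pi_pos.le

end Cell

section Antisymmetry

lemma Fp_two_pi_sub (x y : ℝ) : Fp (2 * π - x) (2 * π - y) = Fp x y := by
  simp only [Fp, sin_two_pi_sub_half, cos_two_pi_sub_half]
  ring

lemma Fm_two_pi_sub (x y : ℝ) : Fm (2 * π - x) (2 * π - y) = Fm x y := by
  simp only [Fm, sin_two_pi_sub_half, cos_two_pi_sub_half]
  ring

lemma K1_two_pi_sub (x y : ℝ) : K1 (2 * π - x) (2 * π - y) = K1 x y := by
  simp only [K1, Fm_two_pi_sub]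

lemma K2_two_pi_sub (x y : ℝ) : K2 (2 * π - x) (2 * π - y) = K2 x y := by
  simp only [K2, Fp_two_pi_sub]

lemma VV_two_pi_sub (x : ℝ) : VV (2 * π - x) = VV x := by
  simp only [VV, restrict_II]
  rw [← setIntegral_comp_two_pi_sub]
  simp only [K2_two_pi_sub]

lemma Bker_two_pi_sub (x y : ℝ) : Bker (2 * π - x) (2 * π - y) = Bker x y := by
  simp only [Bker, VV_two_pi_sub, K1_two_pi_sub, K2_two_pi_sub]

lemma WW_two_pi_sub (x : ℝ) : WW (2 * π - x) = WW x := by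
  simp only [WW, VV_two_pi_sub, sin_two_pi_sub_half]

lemma omg'_two_pi_sub {x : ℝ} (hx : x ∈ Ioo 0 (2 * π)) : omg' (2 * π - x) = -omg' x := by
  rw [omg', omg', if_neg (two_pi_sub_mem hx).1.ne', if_neg hx.1.ne', cos_two_pi_sub_half, neg_div]

lemma phiLam_two_pi_sub (lam x : ℝ) : phiLam lam (2 * π - x) = -phiLam lam x := by
  simp only [phiLam, restrict_II]
  rw [← setIntegral_comp_two_pi_sub, ← integral_neg]
  refine setIntegral_congr_fun measurableSet_Ioo fun y hy ↦ ?_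
  simp only [Bker_two_pi_sub, WW_two_pi_sub, omg'_two_pi_sub hy, mul_neg]

end Antisymmetry

section Potential

variable {x y : ℝ}

lemma measurable_K2 : Measurable (Function.uncurry K2) := by
  unfold Function.uncurry K2 Fp
  fun_prop

lemma K2_nonneg (x y : ℝ) : 0 ≤ K2 x y := by
  unfold K2
  positivity

lemma four_mul_sin_half_mul_sin_half_le_Fp (x y : ℝ) :
    4 * (sin (x / 2) * sin (y / 2)) ≤ Fp x y := by
  unfold Fp
  linarith [sq_nonneg (cos (x / 2) + cos (y / 2))]

lemma Fp_pos (hx : x ∈ Ioo 0 (2 * π)) (hy : y ∈ Ioo 0 (2 * π)) : 0 < Fp x y :=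
  (mul_pos four_pos (mul_pos (sin_half_pos hx) (sin_half_pos hy))).trans_le
    (four_mul_sin_half_mul_sin_half_le_Fp x y)

lemma K2_le (hx : x ∈ Ioo 0 (2 * π)) (hy : y ∈ Ioo 0 (2 * π)) :
    K2 x y ≤ sin (x / 2) ^ (-(1 / 2) : ℝ) * sin (y / 2) ^ (-(1 / 2) : ℝ) := by
  have hx' := sin_half_pos hx
  have hy' := sin_half_pos hy
  have h4 : √4 = (2 : ℝ) := by
    rw [sqrt_eq_iff_mul_self_eq (by norm_num) (by norm_num)]
    norm_num
  calc K2 x y ≤ 2 / √(4 * (sin (x / 2) * sin (y / 2))) :=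
        div_le_div_of_nonneg_left two_pos.le (sqrt_pos.2 (by positivity))
          (sqrt_le_sqrt (four_mul_sin_half_mul_sin_half_le_Fp x y))
    _ = (√(sin (x / 2) * sin (y / 2)))⁻¹ := by
        rw [sqrt_mul four_pos.le, h4, div_mul_cancel_left₀ two_ne_zero]
    _ = sin (x / 2) ^ (-(1 / 2) : ℝ) * sin (y / 2) ^ (-(1 / 2) : ℝ) := by
        rw [← mul_rpow hx'.le hy'.le, rpow_neg (by positivity), sqrt_eq_rpow]

lemma integrableOn_K2_mul_sin_rpow_and_setIntegral_le {t : ℝ} (ht : -(1 / 2) < t)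
    (hx : x ∈ Ioo 0 (2 * π)) :
    IntegrableOn (fun y ↦ K2 x y * sin (y / 2) ^ t) (Ioo 0 (2 * π)) ∧
      ∫ y in Ioo 0 (2 * π), K2 x y * sin (y / 2) ^ t ≤
        sin (x / 2) ^ (-(1 / 2) : ℝ) *
          ∫ y in Ioo 0 (2 * π), sin (y / 2) ^ (-(1 / 2) + t) := by
  have hdom := (integrableOn_sin_half_rpow (s := -(1 / 2) + t) (by linarith)).const_mul
    (sin (x / 2) ^ (-(1 / 2) : ℝ))
  have hle : ∀ y ∈ Ioo 0 (2 * π), K2 x y * sin (y / 2) ^ t ≤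
      sin (x / 2) ^ (-(1 / 2) : ℝ) * sin (y / 2) ^ (-(1 / 2) + t) := fun y hy ↦ by
    rw [rpow_add (sin_half_pos hy), ← mul_assoc]
    exact mul_le_mul_of_nonneg_right (K2_le hx hy) (rpow_nonneg (sin_half_pos hy).le t)
  have hmeas : Measurable fun y ↦ K2 x y * sin (y / 2) ^ t :=
    measurable_K2.of_uncurry_left.mul ((by fun_prop : Measurable fun y ↦ sin (y / 2)).pow_const t)
  have hint : IntegrableOn (fun y ↦ K2 x y * sin (y / 2) ^ t) (Ioo 0 (2 * π)) := by
    refine hdom.mono' hmeas.aestronglyMeasurable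
      (ae_restrict_of_forall_mem measurableSet_Ioo fun y hy ↦ ?_)
    rw [norm_of_nonneg (mul_nonneg (K2_nonneg x y) (rpow_nonneg (sin_half_pos hy).le t))]
    exact hle y hy
  exact ⟨hint, (setIntegral_mono_on hint hdom measurableSet_Ioo hle).trans_eq
    (integral_const_mul _ _)⟩

lemma integrableOn_K2 (hx : x ∈ Ioo 0 (2 * π)) : IntegrableOn (K2 x) (Ioo 0 (2 * π)) := by
  simpa using (integrableOn_K2_mul_sin_rpow_and_setIntegral_le (t := 0) (by norm_num) hx).1

/- Near the corner `(0, 2π)` both terms of `F₊` are of order `r⁴` on the window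
`2π - 2r < y < 2π`, where `r = sin (x/2) ^ (1/3)`. -/
lemma Fp_two_pi_sub_le {r : ℝ} (hx : x ∈ Ioc 0 π) (hr : 0 ≤ r) (hr3 : r ^ 3 = sin (x / 2))
    (hy : y ∈ Ioo 0 (2 * r)) : Fp x (2 * π - y) ≤ (3 * r ^ 2) ^ 2 := by
  have hs1 : r ^ 3 ≤ 1 := hr3 ▸ sin_le_one _
  have hr1 : r ≤ 1 := (pow_le_one_iff_of_nonneg hr three_ne_zero).1 hs1
  have hcos0 : 0 ≤ cos (x / 2) :=
    cos_nonneg_of_mem_Icc ⟨by linarith [hx.1, pi_pos], by linarith [hx.2]⟩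
  have hcos_sq : r ^ 6 + cos (x / 2) ^ 2 = 1 := by
    rw [← sin_sq_add_cos_sq (x / 2), ← hr3]
    ring
  have hr6 : r ^ 6 ≤ r ^ 2 := pow_le_pow_of_le_one hr hr1 (by norm_num)
  have hcosx : 1 - cos (x / 2) ≤ r ^ 2 := by nlinarith [cos_le_one (x / 2)]
  have hcosy : 1 - cos (y / 2) ≤ r ^ 2 := by
    have : (y / 2) ^ 2 ≤ r ^ 2 := pow_le_pow_left₀ (by linarith [hy.1]) (by linarith [hy.2]) 2
    nlinarith [one_sub_sq_div_two_le_cos (x := y / 2)]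
  have hdiff : (cos (x / 2) - cos (y / 2)) ^ 2 ≤ (r ^ 2) ^ 2 :=
    sq_le_sq' (by linarith [cos_le_one (y / 2)]) (by linarith [cos_le_one (x / 2)])
  have hsin : sin (x / 2) * sin (y / 2) ≤ r ^ 3 * r := by
    rw [hr3]
    have hsx : 0 ≤ sin (x / 2) := hr3 ▸ pow_nonneg hr 3
    exact mul_le_mul_of_nonneg_left ((sin_le (by linarith [hy.1])).trans (by linarith [hy.2])) hsx
  calc Fp x (2 * π - y)
      = (cos (x / 2) - cos (y / 2)) ^ 2 + 4 * (sin (x / 2) * sin (y / 2)) := by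
        rw [Fp, sin_two_pi_sub_half, cos_two_pi_sub_half]
        ring
    _ ≤ (r ^ 2) ^ 2 + 4 * (r ^ 3 * r) := by gcongr
    _ ≤ (3 * r ^ 2) ^ 2 := by nlinarith [pow_nonneg hr 4]

lemma sin_half_rpow_le_VV_of_le_pi (hx : x ∈ Ioc 0 π) :
    sin (x / 2) ^ (-(1 / 3) : ℝ) ≤ VV x := by
  have hx' : x ∈ Ioo 0 (2 * π) := ⟨hx.1, by linarith [hx.2, pi_pos]⟩
  have hs := sin_half_pos hx'
  set r := sin (x / 2) ^ (1 / 3 : ℝ) with hr_def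
  have hr : 0 < r := rpow_pos_of_pos hs _
  have hr1 : r ≤ 1 := rpow_le_one hs.le (sin_le_one _) (by norm_num)
  have hr3 : r ^ 3 = sin (x / 2) := by
    rw [hr_def, ← rpow_natCast, ← rpow_mul hs.le]
    norm_num
  have hwindow : Ioo 0 (2 * r) ⊆ Ioo 0 (2 * π) := Ioo_subset_Ioo_right (by linarith [pi_gt_three])
  have hK2 : ∀ y ∈ Ioo 0 (2 * r), 2 / (3 * r ^ 2) ≤ K2 x (2 * π - y) := fun y hy ↦
    div_le_div_of_nonneg_left two_pos.le (sqrt_pos.2 (Fp_pos hx' (two_pi_sub_mem (hwindow hy))))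
      (sqrt_le_left (by positivity) |>.2 (Fp_two_pi_sub_le hx hr.le hr3 hy))
  have hint : IntegrableOn (fun y ↦ K2 x (2 * π - y)) (Ioo 0 (2 * π)) :=
    (integrableOn_K2 (two_pi_sub_mem hx')).congr_fun
      (fun y _ ↦ by rw [← K2_two_pi_sub, sub_sub_cancel]) measurableSet_Ioo
  calc sin (x / 2) ^ (-(1 / 3) : ℝ) = r⁻¹ := rpow_neg hs.le _
    _ ≤ 2 / (3 * r ^ 2) * (2 * r) := by
        field_simp
        norm_num
    _ = 2 / (3 * r ^ 2) * volume.real (Ioo 0 (2 * r)) := by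
        rw [volume_real_Ioo_of_le (by positivity), sub_zero]
    _ ≤ ∫ y in Ioo 0 (2 * r), K2 x (2 * π - y) :=
        setIntegral_ge_of_const_le_real measurableSet_Ioo measure_Ioo_lt_top.ne hK2
          (hint.mono_set hwindow)
    _ ≤ ∫ y in Ioo 0 (2 * π), K2 x (2 * π - y) :=
        setIntegral_mono_set hint (ae_of_all _ fun y ↦ K2_nonneg x _) hwindow.eventuallyLE
    _ = VV x := by rw [setIntegral_comp_two_pi_sub, VV, restrict_II]

lemma sin_half_rpow_le_VV (hx : x ∈ Ioo 0 (2 * π)) : sin (x / 2) ^ (-(1 / 3) : ℝ) ≤ VV x := by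
  rcases le_total x π with h | h
  · exact sin_half_rpow_le_VV_of_le_pi ⟨hx.1, h⟩
  · rw [← sin_two_pi_sub_half, ← VV_two_pi_sub]
    exact sin_half_rpow_le_VV_of_le_pi ⟨(two_pi_sub_mem hx).1, by linarith⟩

lemma VV_pos (hx : x ∈ Ioo 0 (2 * π)) : 0 < VV x :=
  (rpow_pos_of_pos (sin_half_pos hx) _).trans_le (sin_half_rpow_le_VV hx)

lemma VV_rpow_neg_half_le (hx : x ∈ Ioo 0 (2 * π)) :
    VV x ^ (-(1 : ℝ) / 2) ≤ sin (x / 2) ^ (1 / 6 : ℝ) := by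
  have hs := sin_half_pos hx
  calc VV x ^ (-(1 : ℝ) / 2) ≤ (sin (x / 2) ^ (-(1 / 3) : ℝ)) ^ (-(1 : ℝ) / 2) :=
        rpow_le_rpow_of_nonpos (rpow_pos_of_pos hs _) (sin_half_rpow_le_VV hx) (by norm_num)
    _ = sin (x / 2) ^ (1 / 6 : ℝ) := by
        rw [← rpow_mul hs.le]
        norm_num

lemma sin_half_rpow_le_WW (hx : x ∈ Ioo 0 (2 * π)) : sin (x / 2) ^ (5 / 3 : ℝ) ≤ WW x := by
  have hs := sin_half_pos hx
  calc sin (x / 2) ^ (5 / 3 : ℝ) = sin (x / 2) ^ 2 * sin (x / 2) ^ (-(1 / 3) : ℝ) := by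
        rw [← rpow_natCast, ← rpow_add hs]
        norm_num
    _ ≤ WW x := mul_le_mul_of_nonneg_left (sin_half_rpow_le_VV hx) (sq_nonneg _)

end Potential

section ArcsineDensity

/-- The arcsine density `dq / √(q (r - q))` on `(0, r)`, times `4`, pulled back along
`q = tan (y / 4)` to a density in `y` on `(0, 4 * arctan r)`. -/
def tanArcsineDensity (r y : ℝ) : ℝ :=
  (1 + tan (y / 4) ^ 2) / √(tan (y / 4) * (r - tan (y / 4)))

variable {q r y : ℝ}

lemma hasDerivAt_two_mul_arcsin_sqrt_div (hq : 0 < q) (hqr : q < r) :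
    HasDerivAt (fun q ↦ 2 * arcsin √(q / r)) (1 / √(q * (r - q))) q := by
  have hr : 0 < r := hq.trans hqr
  have hqr' : 0 < r - q := sub_pos.2 hqr
  have hlt : √(q / r) < 1 := by
    rw [sqrt_lt' one_pos, one_pow]
    exact (div_lt_one hr).2 hqr
  have hsqrt := ((hasDerivAt_id' q).div_const r).sqrt (div_pos hq hr).ne'
  refine (((hasDerivAt_arcsin (by linarith [sqrt_nonneg (q / r)]) hlt.ne).comp q
    hsqrt).const_mul 2).congr_deriv ?_
  have hcompl : √(1 - q / r) = √(r - q) / √r := by rw [← sqrt_div hqr'.le, sub_div, div_self hr.ne']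
  rw [sq_sqrt (div_pos hq hr).le, hcompl, sqrt_div hq.le, sqrt_mul hq.le]
  field_simp
  exact sq_sqrt hr.le

lemma cos_div_four_pos (hy : y ∈ Ioo (-(2 * π)) (2 * π)) : 0 < cos (y / 4) :=
  cos_pos_of_mem_Ioo ⟨by linarith [hy.1], by linarith [hy.2]⟩

lemma hasDerivAt_tan_div_four (hy : cos (y / 4) ≠ 0) :
    HasDerivAt (fun y ↦ tan (y / 4)) ((1 + tan (y / 4) ^ 2) / 4) y := by
  have h := (hasDerivAt_tan hy).comp y ((hasDerivAt_id' y).div_const 4)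
  rwa [one_div, ← inv_one_add_tan_sq hy, inv_inv, mul_one_div] at h

lemma tan_div_four_lt_iff (hy : y ∈ Ioo (-(2 * π)) (2 * π)) :
    tan (y / 4) < r ↔ y < 4 * arctan r := by
  have hy' : y / 4 ∈ Ioo (-(π / 2)) (π / 2) := ⟨by linarith [hy.1], by linarith [hy.2]⟩
  rw [← arctan_lt_arctan_iff, arctan_tan hy'.1 hy'.2, div_lt_iff₀' four_pos]

lemma tan_div_four_pos (hy : y ∈ Ioo 0 (2 * π)) : 0 < tan (y / 4) :=
  tan_pos_of_pos_of_lt_pi_div_two (by linarith [hy.1]) (by linarith [hy.2])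

lemma tanArcsineDensity_nonneg (r y : ℝ) : 0 ≤ tanArcsineDensity r y := by
  unfold tanArcsineDensity
  positivity

lemma four_mul_arctan_lt (r : ℝ) : 4 * arctan r < 2 * π := by linarith [arctan_lt_pi_div_two r]

lemma hasDerivAt_eight_mul_arcsin_sqrt_tan (hy : y ∈ Ioo 0 (4 * arctan r)) :
    HasDerivAt (fun y ↦ 4 * (2 * arcsin √(tan (y / 4) / r))) (tanArcsineDensity r y) y := by
  have hy₁ : y ∈ Ioo 0 (2 * π) := ⟨hy.1, hy.2.trans (four_mul_arctan_lt r)⟩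
  have hy₂ : y ∈ Ioo (-(2 * π)) (2 * π) := ⟨by linarith [hy.1, pi_pos], hy₁.2⟩
  refine (((hasDerivAt_two_mul_arcsin_sqrt_div (tan_div_four_pos hy₁)
    ((tan_div_four_lt_iff hy₂).2 hy.2)).comp y
      (hasDerivAt_tan_div_four (cos_div_four_pos hy₂).ne')).const_mul 4).congr_deriv ?_
  rw [tanArcsineDensity]
  ring

lemma continuousOn_eight_mul_arcsin_sqrt_tan (r : ℝ) :
    ContinuousOn (fun y ↦ 4 * (2 * arcsin √(tan (y / 4) / r))) (Icc 0 (4 * arctan r)) := by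
  have htan : ContinuousOn (fun y ↦ tan (y / 4)) (Icc 0 (4 * arctan r)) := fun y hy ↦
    (hasDerivAt_tan_div_four (cos_div_four_pos ⟨by linarith [hy.1, pi_pos],
      hy.2.trans_lt (four_mul_arctan_lt r)⟩).ne').continuousAt.continuousWithinAt
  exact continuousOn_const.mul (continuousOn_const.mul (continuous_arcsin.comp_continuousOn
    (continuous_sqrt.comp_continuousOn (htan.div_const r))))

lemma integrableOn_tanArcsineDensity (r : ℝ) :
    IntegrableOn (tanArcsineDensity r) (Ioo 0 (4 * arctan r)) :=
  (intervalIntegral.integrableOn_deriv_of_nonneg (continuousOn_eight_mul_arcsin_sqrt_tan r)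
    (fun _ hy ↦ hasDerivAt_eight_mul_arcsin_sqrt_tan hy)
    fun y _ ↦ tanArcsineDensity_nonneg r y).mono_set Ioo_subset_Ioc_self

lemma integral_tanArcsineDensity (hr : 0 < r) :
    ∫ y in Ioo 0 (4 * arctan r), tanArcsineDensity r y = 4 * π := by
  have h₀ : 0 ≤ 4 * arctan r := by linarith [arctan_pos.2 hr]
  rw [← integral_Ioc_eq_integral_Ioo, ← intervalIntegral.integral_of_le h₀,
    intervalIntegral.integral_eq_sub_of_hasDerivAt_of_le h₀
      (continuousOn_eight_mul_arcsin_sqrt_tan r)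
      (fun _ hy ↦ hasDerivAt_eight_mul_arcsin_sqrt_tan hy)
      ((intervalIntegrable_iff_integrableOn_Ioo_of_le h₀).2 (integrableOn_tanArcsineDensity r)),
    mul_div_cancel_left₀ _ four_ne_zero, tan_arctan, div_self hr.ne', sqrt_one, arcsin_one,
    zero_div, tan_zero, zero_div, sqrt_zero, arcsin_zero]
  ring

end ArcsineDensity

section HalfAngle

/-- The numerator of `F₋(x, y)` in the half-angle tangents `p = tan (x / 4)`, `q = tan (y / 4)`;
see `Fm_eq`. -/
def FmNumerator (p q : ℝ) : ℝ :=
  (1 - p ^ 2 * q ^ 2) ^ 2 - 4 * p * q * (1 + p ^ 2) * (1 + q ^ 2)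

variable {p q r x y : ℝ}

lemma exists_FmNumerator_eq_zero (hp : 0 < p) : ∃ r > 0, p * r < 1 ∧ FmNumerator p r = 0 := by
  have hcont : ContinuousOn (FmNumerator p) (Icc 0 p⁻¹) := by
    unfold FmNumerator
    fun_prop
  have hleft : 0 < FmNumerator p 0 := by simp [FmNumerator]
  have hright : FmNumerator p p⁻¹ < 0 := by
    have h : p ^ 2 * p⁻¹ ^ 2 = 1 := by rw [← mul_pow, mul_inv_cancel₀ hp.ne', one_pow]
    rw [FmNumerator, h, sub_self, zero_pow two_ne_zero, zero_sub, neg_lt_zero]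
    positivity
  obtain ⟨r, hr, hroot⟩ := intermediate_value_Ioo' (inv_pos.2 hp).le hcont ⟨hright, hleft⟩
  exact ⟨r, hr.1, (lt_inv_mul_iff₀ hp).1 (by simpa using hr.2), hroot⟩

lemma mul_sub_le_FmNumerator_sub (hp : 0 ≤ p) (hq : 0 ≤ q) (hqr : q ≤ r) (hpr : p * r ≤ 1) :
    4 * p * (1 + p ^ 2) * (1 + q ^ 2) * (r - q) ≤ FmNumerator p q - FmNumerator p r := by
  have hr : 0 ≤ r := hq.trans hqr
  have hpr_sq : p ^ 2 * r ^ 2 ≤ 1 := by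
    rw [← mul_pow]
    exact pow_le_one₀ (mul_nonneg hp hr) hpr
  have hsq : (1 - p ^ 2 * r ^ 2) ^ 2 ≤ (1 - p ^ 2 * q ^ 2) ^ 2 :=
    pow_le_pow_left₀ (sub_nonneg.2 hpr_sq) (by gcongr) 2
  have hcubic : 4 * p * r * (1 + p ^ 2) * (1 + q ^ 2) ≤ 4 * p * r * (1 + p ^ 2) * (1 + r ^ 2) := by
    gcongr
  unfold FmNumerator
  linarith

lemma FmNumerator_nonpos (hp : 0 ≤ p) (hr : 0 ≤ r) (hroot : FmNumerator p r = 0) (hrq : r ≤ q)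
    (hpq : p * q ≤ 1) : FmNumerator p q ≤ 0 := by
  have h := mul_sub_le_FmNumerator_sub hp hr hrq hpq
  have : 0 ≤ 4 * p * (1 + p ^ 2) * (1 + r ^ 2) * (q - r) :=
    mul_nonneg (by positivity) (sub_nonneg.2 hrq)
  linarith

lemma sin_half_eq_tan_div_four (x : ℝ) :
    sin (x / 2) = 2 * tan (x / 4) / (1 + tan (x / 4) ^ 2) := by
  rw [sin_eq_two_mul_tan_half_div_one_add_tan_half_sq, div_div]
  norm_num

lemma cos_half_eq_tan_div_four (hx : x ∈ Ioo 0 (2 * π)) :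
    cos (x / 2) = (1 - tan (x / 4) ^ 2) / (1 + tan (x / 4) ^ 2) := by
  have hne : cos (x / 2) ≠ -1 := fun h ↦ by
    nlinarith [sin_half_pos hx, sin_sq_add_cos_sq (x / 2)]
  rw [cos_eq_two_mul_tan_half_div_one_sub_tan_half_sq _ hne, div_div]
  norm_num

lemma Fm_eq (hx : x ∈ Ioo 0 (2 * π)) (hy : y ∈ Ioo 0 (2 * π)) :
    Fm x y = 4 * FmNumerator (tan (x / 4)) (tan (y / 4)) /
      ((1 + tan (x / 4) ^ 2) * (1 + tan (y / 4) ^ 2)) ^ 2 := by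
  rw [Fm, FmNumerator, sin_half_eq_tan_div_four, sin_half_eq_tan_div_four,
    cos_half_eq_tan_div_four hx, cos_half_eq_tan_div_four hy]
  field_simp
  ring

lemma tan_div_four_mul_tan_div_four_lt_one (hx : 0 < x) (hy : y ∈ Ioo 0 (2 * π - x)) :
    tan (x / 4) * tan (y / 4) < 1 := by
  have htan : 0 < tan (y / 4) := tan_div_four_pos ⟨hy.1, by linarith [hy.2]⟩
  rw [← lt_div_iff₀ htan, one_div, ← tan_pi_div_two_sub]
  exact tan_lt_tan_of_lt_of_lt_pi_div_two (by linarith [pi_pos]) (by linarith [hy.1])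
    (by linarith [hy.2])

end HalfAngle

section SingularKernel

variable {r x y : ℝ}

lemma measurable_K1 : Measurable (Function.uncurry K1) := by
  have hFm : Measurable fun p : ℝ × ℝ ↦ Fm p.1 p.2 := by
    unfold Fm
    fun_prop
  exact Measurable.ite (measurableSet_lt measurable_const hFm) (hFm.sqrt.const_div 4)
    measurable_const

lemma K1_nonneg (x y : ℝ) : 0 ≤ K1 x y := by
  unfold K1
  positivity

lemma K1_eq_zero_of_root_le (hx : x ∈ Ioo 0 (2 * π)) (hr : 0 < r)
    (hroot : FmNumerator (tan (x / 4)) r = 0) (hy : y ∈ Ioo 0 (2 * π - x))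
    (hry : r ≤ tan (y / 4)) : K1 x y = 0 := by
  refine if_neg (not_lt.2 ?_)
  have hy' : y ∈ Ioo 0 (2 * π) := ⟨hy.1, by linarith [hx.1, hy.2]⟩
  rw [Fm_eq hx hy']
  refine div_nonpos_of_nonpos_of_nonneg (mul_nonpos_of_nonneg_of_nonpos four_pos.le ?_)
    (by positivity)
  exact FmNumerator_nonpos (tan_div_four_pos hx).le hr.le hroot hry
    (tan_div_four_mul_tan_div_four_lt_one hx.1 hy).le

lemma le_Fm_mul_sin_half (hx : x ∈ Ioo 0 (2 * π)) (hpr : tan (x / 4) * r ≤ 1)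
    (hroot : FmNumerator (tan (x / 4)) r = 0) (hy : y ∈ Ioo 0 (2 * π)) (hyr : tan (y / 4) ≤ r) :
    16 * sin (x / 2) * (tan (y / 4) * (r - tan (y / 4))) / (1 + tan (y / 4) ^ 2) ^ 2 ≤
      Fm x y * sin (y / 2) := by
  have hp := tan_div_four_pos hx
  have hq := tan_div_four_pos hy
  have hnum := mul_sub_le_FmNumerator_sub hp.le hq.le hyr hpr
  rw [hroot, sub_zero] at hnum
  rw [Fm_eq hx hy, sin_half_eq_tan_div_four x, sin_half_eq_tan_div_four y]
  set p := tan (x / 4)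
  set q := tan (y / 4)
  calc 16 * (2 * p / (1 + p ^ 2)) * (q * (r - q)) / (1 + q ^ 2) ^ 2
      = 4 * (4 * p * (1 + p ^ 2) * (1 + q ^ 2) * (r - q)) / ((1 + p ^ 2) * (1 + q ^ 2)) ^ 2 *
          (2 * q / (1 + q ^ 2)) := by
        field_simp
        ring
    _ ≤ 4 * FmNumerator p q / ((1 + p ^ 2) * (1 + q ^ 2)) ^ 2 * (2 * q / (1 + q ^ 2)) := by
        gcongr

lemma K1_mul_sin_half_rpow_le (hx : x ∈ Ioo 0 (2 * π)) (hpr : tan (x / 4) * r ≤ 1)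
    (hroot : FmNumerator (tan (x / 4)) r = 0) (hy : y ∈ Ioo 0 (2 * π)) (hyr : tan (y / 4) < r) :
    K1 x y * sin (y / 2) ^ (-(1 / 2) : ℝ) ≤
      sin (x / 2) ^ (-(1 / 2) : ℝ) * tanArcsineDensity r y := by
  have hx' := sin_half_pos hx
  have hy' := sin_half_pos hy
  have hq := tan_div_four_pos hy
  have hle := le_Fm_mul_sin_half hx hpr hroot hy hyr.le
  rw [tanArcsineDensity, rpow_neg hx'.le, rpow_neg hy'.le, ← sqrt_eq_rpow, ← sqrt_eq_rpow]
  set q := tan (y / 4)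
  have hden : 0 < q * (r - q) := mul_pos hq (sub_pos.2 hyr)
  have hlow : 0 < 16 * sin (x / 2) * (q * (r - q)) / (1 + q ^ 2) ^ 2 := by positivity
  have hFm : 0 < Fm x y := pos_of_mul_pos_left (hlow.trans_le hle) hy'.le
  have h16 : √(16 * sin (x / 2)) = 4 * √(sin (x / 2)) := by
    rw [sqrt_mul (by norm_num), show (16 : ℝ) = 4 ^ 2 by norm_num, sqrt_sq four_pos.le]
  calc K1 x y * (√(sin (y / 2)))⁻¹ = 4 / √(Fm x y * sin (y / 2)) := by
        rw [K1, if_pos hFm, sqrt_mul hFm.le, ← div_eq_mul_inv, div_div]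
    _ ≤ 4 / √(16 * sin (x / 2) * (q * (r - q)) / (1 + q ^ 2) ^ 2) :=
        div_le_div_of_nonneg_left four_pos.le (sqrt_pos.2 hlow) (sqrt_le_sqrt hle)
    _ = (√(sin (x / 2)))⁻¹ * ((1 + q ^ 2) / √(q * (r - q))) := by
        rw [sqrt_div (by positivity), sqrt_sq (by positivity), sqrt_mul (by positivity), h16]
        field_simp

end SingularKernel

section KernelEstimate

variable {t x y : ℝ}

lemma K1_mul_sin_half_rpow_le_indicator {r : ℝ} (ht : -(1 / 2) ≤ t) (hx : x ∈ Ioo 0 (2 * π))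
    (hr : 0 < r) (hpr : tan (x / 4) * r ≤ 1) (hroot : FmNumerator (tan (x / 4)) r = 0)
    (hy : y ∈ Ioo 0 (2 * π - x)) :
    K1 x y * sin (y / 2) ^ t ≤ (Ioo 0 (4 * arctan r)).indicator
      (fun y ↦ sin (x / 2) ^ (-(1 / 2) : ℝ) * tanArcsineDensity r y) y := by
  have hy' : y ∈ Ioo 0 (2 * π) := ⟨hy.1, by linarith [hx.1, hy.2]⟩
  have htan : tan (y / 4) < r ↔ y < 4 * arctan r :=
    tan_div_four_lt_iff ⟨by linarith [hy.1, pi_pos], hy'.2⟩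
  rcases lt_or_ge (tan (y / 4)) r with hyr | hry
  · rw [indicator_of_mem (mem_Ioo.2 ⟨hy.1, htan.1 hyr⟩)]
    exact (mul_le_mul_of_nonneg_left (rpow_le_rpow_of_exponent_ge (sin_half_pos hy')
      (sin_le_one _) ht) (K1_nonneg x y)).trans
        (K1_mul_sin_half_rpow_le hx hpr hroot hy' hyr)
  · rw [K1_eq_zero_of_root_le hx hr hroot hy hry, zero_mul]
    exact indicator_nonneg (fun y _ ↦ mul_nonneg (rpow_nonneg (sin_half_pos hx).le _)
      (tanArcsineDensity_nonneg r y)) y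

lemma integrableOn_K1_mul_sin_rpow_and_setIntegral_le_left (ht : -(1 / 2) ≤ t)
    (hx : x ∈ Ioo 0 (2 * π)) :
    IntegrableOn (fun y ↦ K1 x y * sin (y / 2) ^ t) (Ioo 0 (2 * π - x)) ∧
      ∫ y in Ioo 0 (2 * π - x), K1 x y * sin (y / 2) ^ t ≤
        4 * π * sin (x / 2) ^ (-(1 / 2) : ℝ) := by
  obtain ⟨r, hr, hpr, hroot⟩ := exists_FmNumerator_eq_zero (tan_div_four_pos hx)
  set G := (Ioo 0 (4 * arctan r)).indicator
    fun y ↦ sin (x / 2) ^ (-(1 / 2) : ℝ) * tanArcsineDensity r y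
  have hG : Integrable G :=
    (integrable_indicator_iff measurableSet_Ioo).2
      ((integrableOn_tanArcsineDensity r).const_mul _)
  have hG_integral : ∫ y, G y = 4 * π * sin (x / 2) ^ (-(1 / 2) : ℝ) := by
    rw [integral_indicator measurableSet_Ioo, integral_const_mul, integral_tanArcsineDensity hr,
      mul_comm]
  have hG_nonneg : 0 ≤ G := indicator_nonneg fun y _ ↦
    mul_nonneg (rpow_nonneg (sin_half_pos hx).le _) (tanArcsineDensity_nonneg r y)
  have hle : ∀ y ∈ Ioo 0 (2 * π - x), K1 x y * sin (y / 2) ^ t ≤ G y := fun y hy ↦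
    K1_mul_sin_half_rpow_le_indicator ht hx hr hpr.le hroot hy
  have hmeas : Measurable fun y ↦ K1 x y * sin (y / 2) ^ t :=
    measurable_K1.of_uncurry_left.mul ((by fun_prop : Measurable fun y ↦ sin (y / 2)).pow_const t)
  have hint : IntegrableOn (fun y ↦ K1 x y * sin (y / 2) ^ t) (Ioo 0 (2 * π - x)) := by
    refine hG.integrableOn.mono' hmeas.aestronglyMeasurable
      (ae_restrict_of_forall_mem measurableSet_Ioo fun y hy ↦ ?_)
    have hsin : 0 < sin (y / 2) := sin_half_pos ⟨hy.1, by linarith [hx.1, hy.2]⟩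
    rw [norm_of_nonneg (mul_nonneg (K1_nonneg x y) (rpow_nonneg hsin.le t))]
    exact hle y hy
  exact ⟨hint, (setIntegral_mono_on hint hG.integrableOn measurableSet_Ioo hle).trans
    ((setIntegral_le_integral hG (ae_of_all _ hG_nonneg)).trans_eq hG_integral)⟩

lemma integrableOn_K1_mul_sin_rpow_and_setIntegral_le (ht : -(1 / 2) ≤ t) (hx : x ∈ Ioo 0 (2 * π)) :
    IntegrableOn (fun y ↦ K1 x y * sin (y / 2) ^ t) (Ioo 0 (2 * π)) ∧
      ∫ y in Ioo 0 (2 * π), K1 x y * sin (y / 2) ^ t ≤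
        8 * π * sin (x / 2) ^ (-(1 / 2) : ℝ) := by
  obtain ⟨hint, hle⟩ := integrableOn_K1_mul_sin_rpow_and_setIntegral_le_left ht hx
  have hreflect : ∀ y, K1 x (0 + 2 * π - y) * sin ((0 + 2 * π - y) / 2) ^ t =
      K1 (2 * π - x) y * sin (y / 2) ^ t := fun y ↦ by
    rw [zero_add, sin_two_pi_sub_half, ← K1_two_pi_sub x, sub_sub_cancel]
  have hright := integrableOn_K1_mul_sin_rpow_and_setIntegral_le_left ht (two_pi_sub_mem hx)
  rw [← zero_add (2 * π - (2 * π - x)), ← add_sub_assoc, sin_two_pi_sub_half] at hright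
  simp only [← hreflect] at hright
  have hx₀ := (two_pi_sub_mem hx).1.le
  have hx₁ : 2 * π - x ≤ 2 * π := sub_le_self _ hx.1.le
  have hint' := integrableOn_Ioo_of_Ioo_comp_sub_left hx₀ hx₁ hint hright.1
  refine ⟨hint', ?_⟩
  rw [setIntegral_Ioo_eq_add_comp_sub_left hx₀ hx₁ hint']
  linarith [hright.2]

lemma exists_setIntegral_kernel_mul_sin_rpow_le (ht : -(1 / 2) < t) :
    ∃ C > 0, ∀ x ∈ Ioo 0 (2 * π),
      IntegrableOn (fun y ↦ (2 * K2 x y + K1 x y) * sin (y / 2) ^ t) (Ioo 0 (2 * π)) ∧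
        ∫ y in Ioo 0 (2 * π), (2 * K2 x y + K1 x y) * sin (y / 2) ^ t ≤
          C * sin (x / 2) ^ (-(1 / 2) : ℝ) := by
  have hA : 0 ≤ ∫ y in Ioo 0 (2 * π), sin (y / 2) ^ (-(1 / 2) + t) :=
    setIntegral_nonneg measurableSet_Ioo fun y hy ↦ rpow_nonneg (sin_half_pos hy).le _
  refine ⟨2 * (∫ y in Ioo 0 (2 * π), sin (y / 2) ^ (-(1 / 2) + t)) + 8 * π, by positivity,
    fun x hx ↦ ?_⟩
  obtain ⟨hint₁, hle₁⟩ := integrableOn_K1_mul_sin_rpow_and_setIntegral_le ht.le hx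
  obtain ⟨hint₂, hle₂⟩ := integrableOn_K2_mul_sin_rpow_and_setIntegral_le ht hx
  simp only [add_mul, mul_assoc (2 : ℝ) (K2 x _)]
  refine ⟨(hint₂.const_mul 2).add hint₁, ?_⟩
  rw [integral_add (hint₂.const_mul 2) hint₁, integral_const_mul]
  linarith

end KernelEstimate

section Source

/-- The source `ψ_λ = W^{1/2} ω' / (W + λ)`, so that `φ_λ = B ψ_λ`. -/
def psiLam (lam y : ℝ) : ℝ :=
  √(WW y) / (WW y + lam) * omg' y

variable {lam θ y : ℝ}

lemma rpow_mul_rpow_one_sub_le_add {a b : ℝ} (ha : 0 ≤ a) (hb : 0 ≤ b) (hθ : θ ∈ Icc 0 1) :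
    a ^ θ * b ^ (1 - θ) ≤ a + b :=
  calc a ^ θ * b ^ (1 - θ) ≤ θ * a + (1 - θ) * b :=
        geom_mean_le_arith_mean2_weighted hθ.1 (sub_nonneg.2 hθ.2) ha hb (add_sub_cancel θ 1)
    _ ≤ a + b := add_le_add (mul_le_of_le_one_left ha hθ.2)
        (mul_le_of_le_one_left hb (sub_le_self 1 hθ.1))

lemma abs_omg'_le_one (y : ℝ) : |omg' y| ≤ 1 := by
  unfold omg'
  split_ifs
  · simp
  · rw [abs_div, abs_two]
    linarith [abs_cos_le_one (y / 2)]

lemma VV_rpow_neg_half_mul_psiLam (lam : ℝ) (hy : y ∈ Ioo 0 (2 * π)) :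
    VV y ^ (-(1 : ℝ) / 2) * psiLam lam y = sin (y / 2) / (WW y + lam) * omg' y := by
  have hV := VV_pos hy
  have hcancel : VV y ^ (-(1 : ℝ) / 2) * √(WW y) = sin (y / 2) := by
    rw [WW, sqrt_mul (sq_nonneg _), sqrt_sq (sin_half_pos hy).le, neg_div, rpow_neg hV.le,
      ← sqrt_eq_rpow, mul_left_comm, inv_mul_cancel₀ (sqrt_pos.2 hV).ne', mul_one]
  rw [psiLam, ← hcancel]
  ring

lemma sin_half_div_WW_add_le (hθ : θ ∈ Icc 0 1) (hlam : 0 < lam) (hy : y ∈ Ioo 0 (2 * π)) :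
    sin (y / 2) / (WW y + lam) ≤ lam ^ (θ - 1) * sin (y / 2) ^ (1 - 5 / 3 * θ) := by
  have hs := sin_half_pos hy
  have hW := sin_half_rpow_le_WW hy
  have hden : sin (y / 2) ^ (5 / 3 * θ) * lam ^ (1 - θ) ≤ WW y + lam := by
    rw [rpow_mul hs.le]
    exact (rpow_mul_rpow_one_sub_le_add (rpow_nonneg hs.le _) hlam.le hθ).trans (by gcongr)
  calc sin (y / 2) / (WW y + lam) ≤ sin (y / 2) / (sin (y / 2) ^ (5 / 3 * θ) * lam ^ (1 - θ)) := by
        gcongr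
    _ = lam ^ (θ - 1) * sin (y / 2) ^ (1 - 5 / 3 * θ) := by
        rw [← neg_sub 1 θ, rpow_neg hlam.le, rpow_sub hs, rpow_one]
        field_simp

lemma abs_VV_rpow_neg_half_mul_psiLam_le (hθ : θ ∈ Icc 0 1) (hlam : 0 < lam)
    (hy : y ∈ Ioo 0 (2 * π)) :
    |VV y ^ (-(1 : ℝ) / 2) * psiLam lam y| ≤
      lam ^ (θ - 1) * sin (y / 2) ^ (1 - 5 / 3 * θ) := by
  have hW : 0 ≤ WW y := mul_nonneg (sq_nonneg _) (VV_pos hy).le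
  rw [VV_rpow_neg_half_mul_psiLam lam hy, abs_mul,
    abs_of_nonneg (div_nonneg (sin_half_pos hy).le (by positivity))]
  exact (mul_le_of_le_one_right (div_nonneg (sin_half_pos hy).le (by positivity))
    (abs_omg'_le_one y)).trans (sin_half_div_WW_add_le hθ hlam hy)

end Source

section SquareNorm

variable {lam θ x y : ℝ}

lemma abs_Bker_mul_psiLam_le (hθ : θ ∈ Icc 0 1) (hlam : 0 < lam) (hx : x ∈ Ioo 0 (2 * π))
    (hy : y ∈ Ioo 0 (2 * π)) :
    |Bker x y * psiLam lam y| ≤ sin (x / 2) ^ (1 / 6 : ℝ) * lam ^ (θ - 1) *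
      ((2 * K2 x y + K1 x y) * sin (y / 2) ^ (1 - 5 / 3 * θ)) := by
  have hK : |2 * K2 x y - K1 x y| ≤ 2 * K2 x y + K1 x y :=
    abs_le.2 ⟨by linarith [K2_nonneg x y], by linarith [K1_nonneg x y]⟩
  have hV := rpow_nonneg (VV_pos hx).le (-(1 : ℝ) / 2)
  have hs := rpow_nonneg (sin_half_pos hx).le (1 / 6 : ℝ)
  have hK' := (abs_nonneg _).trans hK
  calc |Bker x y * psiLam lam y|
      = VV x ^ (-(1 : ℝ) / 2) * |2 * K2 x y - K1 x y| *
          |VV y ^ (-(1 : ℝ) / 2) * psiLam lam y| := by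
        rw [Bker, mul_assoc, abs_mul, abs_mul, abs_of_nonneg hV]
    _ ≤ sin (x / 2) ^ (1 / 6 : ℝ) * (2 * K2 x y + K1 x y) *
          (lam ^ (θ - 1) * sin (y / 2) ^ (1 - 5 / 3 * θ)) := by
        gcongr
        exacts [VV_rpow_neg_half_le hx, abs_VV_rpow_neg_half_mul_psiLam_le hθ hlam hy]
    _ = _ := by ring

lemma exists_abs_phiLam_le (hθ : θ ∈ Ico 0 (9 / 10)) :
    ∃ C > 0, ∀ lam > 0, ∀ x ∈ Ioo 0 (2 * π),
      |phiLam lam x| ≤ C * lam ^ (θ - 1) * sin (x / 2) ^ (-(1 / 3) : ℝ) := by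
  obtain ⟨C, hC, hkernel⟩ :=
    exists_setIntegral_kernel_mul_sin_rpow_le (t := 1 - 5 / 3 * θ) (by linarith [hθ.2])
  refine ⟨C, hC, fun lam hlam x hx ↦ ?_⟩
  have hs := sin_half_pos hx
  obtain ⟨hint, hle⟩ := hkernel x hx
  calc |phiLam lam x| = ‖∫ y in Ioo 0 (2 * π), Bker x y * psiLam lam y‖ := by
        rw [← restrict_II]
        rfl
    _ ≤ ∫ y in Ioo 0 (2 * π), sin (x / 2) ^ (1 / 6 : ℝ) * lam ^ (θ - 1) *
          ((2 * K2 x y + K1 x y) * sin (y / 2) ^ (1 - 5 / 3 * θ)) :=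
        norm_integral_le_of_norm_le (hint.const_mul _) (ae_restrict_of_forall_mem
          measurableSet_Ioo fun y hy ↦
            abs_Bker_mul_psiLam_le ⟨hθ.1, by linarith [hθ.2]⟩ hlam hx hy)
    _ ≤ sin (x / 2) ^ (1 / 6 : ℝ) * lam ^ (θ - 1) * (C * sin (x / 2) ^ (-(1 / 2) : ℝ)) := by
        rw [integral_const_mul]
        gcongr
    _ = C * lam ^ (θ - 1) * (sin (x / 2) ^ (1 / 6 : ℝ) * sin (x / 2) ^ (-(1 / 2) : ℝ)) := by ring
    _ = C * lam ^ (θ - 1) * sin (x / 2) ^ (-(1 / 3) : ℝ) := by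
        rw [← rpow_add hs]
        norm_num

lemma measurable_VV : Measurable VV :=
  measurable_K2.stronglyMeasurable.integral_prod_right.measurable

lemma measurable_phiLam (lam : ℝ) : Measurable (phiLam lam) := by
  have hV := measurable_VV
  have hK₁ := measurable_K1
  have hK₂ := measurable_K2
  have hB : Measurable (Function.uncurry Bker) :=
    (((hV.comp measurable_fst).pow_const _).mul ((hK₂.const_mul 2).sub hK₁)).mul
      ((hV.comp measurable_snd).pow_const _)
  have hW : Measurable WW := by
    unfold WW
    fun_prop
  have homg : Measurable omg' :=
    Measurable.ite (measurableSet_singleton 0) measurable_const (by fun_prop)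
  have hψ : Measurable (psiLam lam) := (hW.sqrt.div (hW.add_const lam)).mul homg
  exact (hB.mul (hψ.comp measurable_snd)).stronglyMeasurable.integral_prod_right'.measurable

lemma exists_setIntegral_phiLam_sq_le (hθ : θ ∈ Ico 0 (9 / 10)) :
    ∃ c > 0, ∀ lam > 0, MemLp (phiLam lam) 2 muI ∧
      ∫ x in II, phiLam lam x ^ 2 ≤ c * lam ^ (2 * (θ - 1)) := by
  obtain ⟨C, hC, hbound⟩ := exists_abs_phiLam_le hθ
  have hA : 0 ≤ ∫ x in Ioo 0 (2 * π), sin (x / 2) ^ (-(2 / 3) : ℝ) :=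
    setIntegral_nonneg measurableSet_Ioo fun x hx ↦ rpow_nonneg (sin_half_pos hx).le _
  refine ⟨C ^ 2 * (∫ x in Ioo 0 (2 * π), sin (x / 2) ^ (-(2 / 3) : ℝ)) + 1, by positivity,
    fun lam hlam ↦ ?_⟩
  have hsq : ∀ x ∈ Ioo 0 (2 * π), phiLam lam x ^ 2 ≤
      C ^ 2 * lam ^ (2 * (θ - 1)) * sin (x / 2) ^ (-(2 / 3) : ℝ) := fun x hx ↦ by
    have hs := sin_half_pos hx
    calc phiLam lam x ^ 2 ≤ (C * lam ^ (θ - 1) * sin (x / 2) ^ (-(1 / 3) : ℝ)) ^ 2 :=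
          sq_le_sq.2 ((hbound lam hlam x hx).trans (le_abs_self _))
      _ = C ^ 2 * lam ^ (2 * (θ - 1)) * sin (x / 2) ^ (-(2 / 3) : ℝ) := by
          rw [mul_pow, mul_pow, ← rpow_mul_natCast hlam.le, ← rpow_mul_natCast hs.le,
            Nat.cast_ofNat, mul_comm (θ - 1)]
          norm_num
  have hdom := (integrableOn_sin_half_rpow (s := -(2 / 3)) (by norm_num)).const_mul
    (C ^ 2 * lam ^ (2 * (θ - 1)))
  have hint : IntegrableOn (fun x ↦ phiLam lam x ^ 2) (Ioo 0 (2 * π)) :=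
    hdom.mono' ((measurable_phiLam lam).pow_const 2).aestronglyMeasurable
      (ae_restrict_of_forall_mem measurableSet_Ioo fun x hx ↦
        (norm_of_nonneg (sq_nonneg _)).trans_le (hsq x hx))
  rw [muI, memLp_two_iff_integrable_sq (measurable_phiLam lam).aestronglyMeasurable, restrict_II]
  refine ⟨hint, (setIntegral_mono_on hint hdom measurableSet_Ioo hsq).trans ?_⟩
  rw [integral_const_mul]
  linarith [rpow_nonneg hlam.le (2 * (θ - 1))]

end SquareNorm

theorem phiLam_norm_bound_and_antisymmetry_general :
    (∀ ε ∈ Ioc (0 : ℝ) (9 / 5), ∃ c > 0, ∀ lam > 0, MemLp (phiLam lam) 2 muI ∧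
      ∫ x in II, phiLam lam x ^ 2 ≤ c * lam ^ (-(1 : ℝ) / 5 - ε)) ∧
    ∀ lam > 0, ∀ x ∈ Ioo 0 (2 * π), phiLam lam (2 * π - x) = -phiLam lam x := by
  refine ⟨fun ε hε ↦ ?_, fun lam _ x _ ↦ phiLam_two_pi_sub lam x⟩
  have hexp : -(1 : ℝ) / 5 - ε = 2 * ((9 / 10 - ε / 2) - 1) := by ring
  rw [hexp]
  exact exists_setIntegral_phiLam_sq_le ⟨by linarith [hε.2], by linarith [hε.1]⟩

/-- **Corollary 6.4.**  For every `0 < ε < 3/5` there is `c_ε > 0` with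
`‖φ_λ‖² ≤ c_ε λ^{−1/5−ε}` for all `0 < λ < 1`; moreover `P φ_λ = −φ_λ`
(i.e. `φ_λ(2π−x) = −φ_λ(x)` on `(0,2π)`). -/
theorem phiLam_norm_bound_and_antisymmetry :
    (∀ ε ∈ Set.Ioo (0 : ℝ) (3 / 5), ∃ c > (0 : ℝ),
      ∀ lam ∈ Set.Ioo (0 : ℝ) 1,
        (∫ x in II, phiLam lam x ^ 2) ≤ c * lam ^ (-(1 : ℝ) / 5 - ε)) ∧
    (∀ lam ∈ Set.Ioo (0 : ℝ) 1, ∀ x ∈ Set.Ioo (0 : ℝ) (2 * π),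
      phiLam lam (2 * π - x) = -phiLam lam x) :=
  ⟨fun ε hε ↦
    have ⟨c, hc, h⟩ := phiLam_norm_bound_and_antisymmetry_general.1 ε ⟨hε.1, by linarith [hε.2]⟩
    ⟨c, hc, fun lam hlam ↦ (h lam hlam.1).2⟩,
    fun lam hlam ↦ phiLam_norm_bound_and_antisymmetry_general.2 lam hlam.1⟩
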